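/- Fix positive integers a < b with c = a/b ∈ (0,1), and fix reals 0 < N0 ≤ Y. Then there exist a constant C > 0 and a positive integer T such that for all integers t ≥ T, with n = a·t and m = b·t, and for every vector y = (y_1,…,y_n) of reals with N0 ≤ y_1 ≤ … ≤ y_n ≤ Y, the second cumulant κ2 = μ1(2,n,m,y) − μ1(1,n,m,y)² satisfies |n²·κ2 − Ψ1(y)²·e²·(1−c)^{2(1−c)/c}·( (ln(1/(1−c)) − 2c)·Ψ2(y)² + c·Ψ3(y) )| ≤ C/n². -/

import Mathlib

open Finset

/-- Exact `p`-th moment of the GLRT statistic under `H₀`. -/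
noncomputable def mu0 (p n m : ℕ) : ℝ :=
  Real.Gamma ((m : ℝ) * n) / ((n : ℝ) ^ p * Real.Gamma ((m : ℝ) * n - p)) *
    ∏ j ∈ Finset.range n,
      Real.Gamma ((m : ℝ) - n + 1 - p / n + j) / Real.Gamma ((m : ℝ) - n + 1 + j)

/-- Exact `p`-th moment of the GLRT statistic under `H₁`, in terms of the covariance
eigenvalues `y`. -/
noncomputable def mu1 (p n m : ℕ) (y : Fin n → ℝ) : ℝ :=
  (Nat.factorial p : ℝ) / (n : ℝ) ^ p *
    (∏ i, y i ^ (-(p : ℝ) / n)) *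
    (∏ j ∈ Finset.range n,
      Real.Gamma ((m : ℝ) - n + 1 - p / n + j) / Real.Gamma ((m : ℝ) - n + 1 + j)) *
    ∑ k ∈ Finset.Nat.antidiagonalTuple n p,
      ∏ i, Real.Gamma ((m : ℝ) - p / n + k i) * y i ^ (k i)
        / (Real.Gamma ((k i : ℝ) + 1) * Real.Gamma ((m : ℝ) - p / n))

/-- `Ψ₁(y) = ∏ y_i^{-1/n}`. -/
noncomputable def Psi1 {n : ℕ} (y : Fin n → ℝ) : ℝ := ∏ i, y i ^ (-(1 : ℝ) / n)

/-- `Ψ_{ℓ+1}(y) = (1/n) Σ y_i^ℓ` for `ℓ ≥ 1`. -/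
noncomputable def PsiS {n : ℕ} (ℓ : ℕ) (y : Fin n → ℝ) : ℝ := (1 / (n : ℝ)) * ∑ i, y i ^ ℓ


theorem aT_sum_succ (n p : ℕ) (F : (Fin (n+1) → ℕ) → ℝ) :
    ∑ k ∈ Finset.Nat.antidiagonalTuple (n+1) p, F k =
      ∑ q ∈ Finset.HasAntidiagonal.antidiagonal p, ∑ x ∈ Finset.Nat.antidiagonalTuple n q.2, F (Fin.cons q.1 x) := by
  rw [Finset.sum_sigma']
  refine Finset.sum_bij' (fun k _ => ⟨(k 0, ∑ i, Fin.tail k i), Fin.tail k⟩)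
    (fun s _ => Fin.cons s.1.1 s.2) ?_ ?_ ?_ ?_ ?_
  · intro k hk
    rw [Finset.Nat.mem_antidiagonalTuple, Fin.sum_univ_succ] at hk
    simp [Finset.Nat.mem_antidiagonalTuple, Fin.tail, hk]
  · rintro ⟨⟨u, v⟩, x⟩ hs
    simp [Finset.Nat.mem_antidiagonalTuple] at hs ⊢
    rw [hs.2, hs.1]
  · intro k hk
    simp
  · rintro ⟨⟨u, v⟩, x⟩ hs
    simp [Finset.Nat.mem_antidiagonalTuple] at hs ⊢
    exact hs.2
  · intro k hk
    simp

theorem aT_sum0 (n : ℕ) (f : Fin n → ℕ → ℝ) (h0 : ∀ i, f i 0 = 1) :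
    ∑ k ∈ Finset.Nat.antidiagonalTuple n 0, ∏ i, f i (k i) = 1 := by
  simp [Finset.Nat.antidiagonalTuple_zero_right, h0]

theorem aT_sum1 (n : ℕ) (f : Fin n → ℕ → ℝ) (h0 : ∀ i, f i 0 = 1) :
    ∑ k ∈ Finset.Nat.antidiagonalTuple n 1, ∏ i, f i (k i) = ∑ i, f i 1 := by
  induction n with
  | zero => simp
  | succ n ih =>
    rw [aT_sum_succ]
    have : Finset.HasAntidiagonal.antidiagonal 1 = {(0,1),(1,0)} := by decide
    rw [this]
    simp only [Fin.prod_univ_succ, Fin.cons_zero, Fin.cons_succ, ← Finset.mul_sum]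
    rw [Finset.sum_insert (by simp), Finset.sum_singleton]
    have e1 := ih (fun i => f i.succ) (fun i => h0 _)
    have e0 := aT_sum0 n (fun i => f i.succ) (fun i => h0 _)
    simp only
    rw [e1, e0, h0, Fin.sum_univ_succ]
    ring

theorem aT_sum2 (n : ℕ) (f : Fin n → ℕ → ℝ) (h0 : ∀ i, f i 0 = 1) :
    ∑ k ∈ Finset.Nat.antidiagonalTuple n 2, ∏ i, f i (k i) =
      ∑ i, f i 2 + ((∑ i, f i 1)^2 - ∑ i, (f i 1)^2)/2 := by
  induction n with
  | zero => simp
  | succ n ih =>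
    rw [aT_sum_succ]
    have e2 := ih (fun i => f i.succ) (fun i => h0 _)
    have e1 := aT_sum1 n (fun i => f i.succ) (fun i => h0 _)
    have e0 := aT_sum0 n (fun i => f i.succ) (fun i => h0 _)
    have : Finset.HasAntidiagonal.antidiagonal 2 = {(0,2),(1,1),(2,0)} := by decide
    rw [this]
    simp only [Fin.prod_univ_succ, Fin.cons_zero, Fin.cons_succ, ← Finset.mul_sum]
    rw [Finset.sum_insert (by simp), Finset.sum_insert (by simp), Finset.sum_singleton]
    simp only
    rw [e2, e1, e0, h0, Fin.sum_univ_succ (fun i => f i 2), Fin.sum_univ_succ (fun i => f i 1), Fin.sum_univ_succ (fun i => f i 1 ^2)]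
    ring

/-- the Gamma product -/
noncomputable def PP (p n m : ℕ) : ℝ := ∏ j ∈ Finset.range n,
      Real.Gamma ((m : ℝ) - n + 1 - p / n + j) / Real.Gamma ((m : ℝ) - n + 1 + j)

theorem mu1_one (n m : ℕ) (y : Fin n → ℝ) (_hn : 0 < n) (hM : 0 < (m:ℝ) - 1 / n) :
    mu1 1 n m y = Psi1 y * PP 1 n m * ((m:ℝ) - 1 / n) * PsiS 1 y := by
  unfold mu1 Psi1 PsiS
  rw [← PP]
  simp only [Nat.cast_one]
  set M := (m:ℝ) - 1 / n
  have hG : Real.Gamma M ≠ 0 := (Real.Gamma_pos_of_pos hM).ne'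
  have := aT_sum1 n (fun i k => Real.Gamma (M + k) * y i ^ k / (Real.Gamma ((k:ℝ) + 1) * Real.Gamma M))
    (by intro i; simp [hG])
  rw [this]
  have e : ∀ i, Real.Gamma (M + (1:ℕ)) * y i ^ 1 / (Real.Gamma (((1:ℕ):ℝ) + 1) * Real.Gamma M) = M * y i ^ 1 := by
    intro i
    rw [Nat.cast_one, Real.Gamma_add_one hM.ne', Real.Gamma_add_one one_ne_zero, Real.Gamma_one]
    field_simp
  simp only [e, ← Finset.mul_sum]
  simp
  ring

theorem mu1_two (n m : ℕ) (y : Fin n → ℝ) (hy : ∀ i, 0 < y i) (hn : 0 < n) (hM : 0 < (m:ℝ) - 2 / n) :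
    mu1 2 n m y = Psi1 y ^ 2 * PP 2 n m *
      (((m:ℝ) - 2 / n)^2 * PsiS 1 y ^ 2 + ((m:ℝ) - 2 / n) / n * PsiS 2 y) := by
  have hP : ∏ i, y i ^ (-(2:ℝ) / n) = Psi1 y ^ 2 := by
    unfold Psi1
    rw [← Finset.prod_pow]
    refine Finset.prod_congr rfl fun i _ => ?_
    rw [← Real.rpow_natCast, ← Real.rpow_mul (hy i).le]
    congr 1
    push_cast; ring
  unfold mu1
  rw [← PP]
  simp only [Nat.cast_ofNat]
  rw [hP]
  unfold PsiS
  set M := (m:ℝ) - 2 / n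
  have hG : Real.Gamma M ≠ 0 := (Real.Gamma_pos_of_pos hM).ne'
  have := aT_sum2 n (fun i k => Real.Gamma (M + k) * y i ^ k / (Real.Gamma ((k:ℝ) + 1) * Real.Gamma M))
    (by intro i; simp [hG])
  rw [this]
  have e : ∀ i, Real.Gamma (M + (1:ℕ)) * y i ^ 1 / (Real.Gamma (((1:ℕ):ℝ) + 1) * Real.Gamma M) = M * y i ^ 1 := by
    intro i
    rw [Nat.cast_one, Real.Gamma_add_one hM.ne', Real.Gamma_add_one one_ne_zero, Real.Gamma_one]
    field_simp
  have e2 : ∀ i, Real.Gamma (M + (2:ℕ)) * y i ^ 2 / (Real.Gamma (((2:ℕ):ℝ) + 1) * Real.Gamma M) = (M * (M + 1) / 2) * y i ^ 2 := by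
    intro i
    have : M + (2:ℕ) = (M + 1) + 1 := by push_cast; ring
    rw [this, Real.Gamma_add_one (by positivity), Real.Gamma_add_one hM.ne', Real.Gamma_nat_eq_factorial]
    simp [Nat.factorial]
    field_simp
  have e3 : ∀ i, (M * y i ^ 1)^2 = M^2 * y i ^ 2 := by intro i; ring
  simp only [e, e2, e3, ← Finset.mul_sum]
  have : (n:ℝ) ≠ 0 := by positivity
  simp [Nat.factorial]
  field_simp
  ring

theorem tele_bound (f g : ℕ → ℝ) (h : ∀ k, |f k - f (k+1)| ≤ g k - g (k+1))
    (hf : Filter.Tendsto f Filter.atTop (nhds 0)) (hg : Filter.Tendsto g Filter.atTop (nhds 0)) :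
    |f 0| ≤ g 0 := by
  have h1 : Antitone (fun k => g k - f k) := antitone_nat_of_succ_le fun k => by
    have := (abs_le.mp (h k)).2; linarith
  have h2 : Antitone (fun k => g k + f k) := antitone_nat_of_succ_le fun k => by
    have := (abs_le.mp (h k)).1; linarith
  have l1 : Filter.Tendsto (fun k => g k - f k) Filter.atTop (nhds 0) := by simpa using hg.sub hf
  have l2 : Filter.Tendsto (fun k => g k + f k) Filter.atTop (nhds 0) := by simpa using hg.add hf
  have a1 := h1.le_of_tendsto l1 0
  have a2 := h2.le_of_tendsto l2 0
  rw [abs_le]; constructor <;> linarith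

theorem log_one_sub_bd1 (x : ℝ) (h0 : 0 ≤ x) (h1 : x ≤ 1/2) :
    |x + Real.log (1 - x)| ≤ 2 * x^2 := by
  have := Real.abs_log_sub_add_sum_range_le (x := x) (by rw [abs_of_nonneg h0]; linarith) 1
  simp only [Finset.sum_range_one, abs_of_nonneg h0] at this
  norm_num at this
  refine this.trans ?_
  rw [div_le_iff₀ (by linarith)]
  nlinarith [sq_nonneg x]

theorem log_one_sub_bd2 (x : ℝ) (h1 : |x| ≤ 1/2) :
    |x + x^2/2 + Real.log (1 - x)| ≤ 2 * |x|^3 := by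
  have := Real.abs_log_sub_add_sum_range_le (x := x) (by linarith) 2
  simp only [Finset.sum_range_succ, Finset.sum_range_zero] at this
  norm_num at this
  refine this.trans ?_
  rw [div_le_iff₀ (by linarith)]
  have : 0 ≤ |x|^3 := by positivity
  nlinarith

theorem L1 (w s : ℝ) (hw : 2 ≤ w) (hs : 0 ≤ s) (hs1 : s ≤ 1) :
    |Real.log w - Real.log (w - s) - s / w| ≤ 2 * s^2 / w^2 := by
  have hw0 : 0 < w := by linarith
  have := log_one_sub_bd1 (s / w) (by positivity) (by rw [div_le_iff₀ hw0]; linarith)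
  have e : 1 - s / w = (w - s) / w := by field_simp
  rw [e, Real.log_div (by linarith) hw0.ne'] at this
  rw [abs_sub_comm]
  convert this using 2 <;> ring

theorem log_pair (w : ℝ) (hw : 1 ≤ w) :
    ∃ e1 e2 : ℝ, |e1| ≤ 1/(4*w^3) ∧ |e2| ≤ 1/(4*w^3) ∧
      Real.log (w + 1/2) = Real.log w + 1/(2*w) - 1/(8*w^2) + e1 ∧
      Real.log (w - 1/2) = Real.log w - 1/(2*w) - 1/(8*w^2) + e2 := by
  have hw0 : 0 < w := by linarith
  have hx : |1/(2*w)| ≤ 1/2 := by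
    rw [abs_of_pos (by positivity), div_le_div_iff₀ (by positivity) (by norm_num)]; linarith
  have hx3 : 2 * |1/(2*w)|^3 = 1/(4*w^3) := by
    rw [abs_of_pos (by positivity)]; field_simp; norm_num
  have a := log_one_sub_bd2 (1/(2*w)) hx
  have b := log_one_sub_bd2 (-(1/(2*w))) (by rwa [abs_neg])
  rw [abs_neg] at b
  rw [hx3] at a b
  refine ⟨_, _, b, a, ?_, ?_⟩
  · have e : 1 - -(1/(2*w)) = (w + 1/2) / w := by field_simp; ring
    rw [e, Real.log_div (by linarith) hw0.ne']
    field_simp; ring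
  · have e : 1 - (1/(2*w)) = (w - 1/2) / w := by field_simp
    rw [e, Real.log_div (by linarith) hw0.ne']
    field_simp; ring

theorem L2 (w : ℝ) (hw : 1 ≤ w) :
    |Real.log (w + 1/2) - Real.log (w - 1/2) - 1/w| ≤ 1 / w^3 := by
  obtain ⟨e1, e2, h1, h2, h3, h4⟩ := log_pair w hw
  have hw0 : 0 < w := by linarith
  have : Real.log (w + 1/2) - Real.log (w - 1/2) - 1/w = e1 - e2 := by
    rw [h3, h4]; field_simp; ring
  rw [this]
  have h5 : 1/(4*w^3) = (1/w^3)/4 := by field_simp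
  rw [h5] at h1 h2
  have : 0 < 1/w^3 := by positivity
  have := abs_sub e1 e2
  linarith

noncomputable def HH (x : ℝ) : ℝ := x * Real.log x - x

theorem L3 (w : ℝ) (hw : 1 ≤ w) :
    |HH (w + 1/2) - HH (w - 1/2) - Real.log w| ≤ 1 / w^2 := by
  obtain ⟨e1, e2, h1, h2, h3, h4⟩ := log_pair w hw
  have hw0 : 0 < w := by linarith
  have : HH (w + 1/2) - HH (w - 1/2) - Real.log w = (w+1/2)*e1 - (w-1/2)*e2 - 1/(8*w^2) := by
    unfold HH
    rw [h3, h4]; field_simp; ring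
  rw [this]
  have k1 : |(w+1/2)*e1| ≤ (w+1/2) * (1/(4*w^3)) := by
    rw [abs_mul, abs_of_pos (by linarith : 0 < w + 1/2)]; gcongr
  have k2 : |(w-1/2)*e2| ≤ (w-1/2) * (1/(4*w^3)) := by
    rw [abs_mul, abs_of_pos (by linarith : 0 < w - 1/2)]
    exact mul_le_mul_of_nonneg_left h2 (by linarith)
  have k3 : (w+1/2) * (1/(4*w^3)) + (w-1/2) * (1/(4*w^3)) = (1/w^2)/2 := by field_simp; ring
  have k4 : 1/(8*w^2) = (1/w^2)/8 := by field_simp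
  have : 0 < 1/w^2 := by positivity
  rw [k4]
  rw [abs_le] at *
  constructor <;> linarith

theorem log_diff_le (u v : ℝ) (hu : 0 < u) (huv : u ≤ v) :
    Real.log v - Real.log u ≤ (v - u) / u := by
  have hv : 0 < v := by linarith
  rw [← Real.log_div hv.ne' hu.ne']
  have := Real.log_le_sub_one_of_pos (x := v / u) (by positivity)
  calc _ ≤ _ := this
    _ = _ := by field_simp

noncomputable def lg (x : ℝ) : ℝ := Real.log (Real.Gamma x)

theorem lg_succ (x : ℝ) (hx : 0 < x) : lg (x + 1) = lg x + Real.log x := by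
  unfold lg
  rw [Real.Gamma_add_one hx.ne', Real.log_mul hx.ne' (Real.Gamma_pos_of_pos hx).ne']; ring

theorem lg_up (z s : ℝ) (hs : 0 < s) (hz : 0 < z - s) : lg z - lg (z - s) ≤ s * Real.log z := by
  have := Real.convexOn_log_Gamma.secant_mono_aux1 (x := z - s) (y := z) (z := z + 1)
    hz (by simp; linarith) (by linarith) (by linarith)
  simp only [Function.comp] at this
  have e := lg_succ z (by linarith)
  unfold lg at *
  rw [e] at this
  linarith

theorem lg_lo (z s : ℝ) (hs : 0 < s) (hz : 0 < z - s - 1) :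
    s * Real.log (z - s - 1) ≤ lg z - lg (z - s) := by
  have := Real.convexOn_log_Gamma.secant_mono_aux1 (x := z - s - 1) (y := z - s) (z := z)
    hz (by simp; linarith) (by linarith) (by linarith)
  simp only [Function.comp] at this
  have e := lg_succ (z - s - 1) hz
  rw [sub_add_cancel] at e
  have e' : s * lg (z - s) = s * lg (z - s - 1) + s * Real.log (z - s - 1) := by rw [e]; ring
  unfold lg at *
  linarith

theorem tendsto_aux (A z : ℝ) :
    Filter.Tendsto (fun k : ℕ => A / (z + k)) Filter.atTop (nhds 0) := by
  apply Filter.Tendsto.div_atTop tendsto_const_nhds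
  exact Filter.tendsto_atTop_add_const_left _ _ tendsto_natCast_atTop_atTop

theorem tendsto_aux_pow (A z : ℝ) (r : ℕ) (hr : r ≠ 0) :
    Filter.Tendsto (fun k : ℕ => A / (z + k)^r) Filter.atTop (nhds 0) := by
  apply Filter.Tendsto.div_atTop tendsto_const_nhds
  refine (Filter.tendsto_pow_atTop hr).comp ?_
  exact Filter.tendsto_atTop_add_const_left _ _ tendsto_natCast_atTop_atTop

theorem D1 (z s : ℝ) (hz : 3 ≤ z) (hs : 0 < s) (hs1 : s ≤ 1) :
    |lg z - lg (z - s) - s * Real.log (z - 1/2)| ≤ 2 * s^2 / (z - 1) + s / (z - 1)^2 := by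
  have key := tele_bound
    (fun k => lg (z + k) - lg (z + k - s) - s * Real.log (z + k - 1/2))
    (fun k => 2 * s^2 / ((z - 1) + k) + s / ((z - 1) + k)^2) ?_ ?_ ?_
  · simpa using key
  · intro k
    push_cast
    have hk : (0:ℝ) ≤ k := by positivity
    obtain ⟨w, hw⟩ : ∃ w, w = z + k := ⟨_, rfl⟩
    have hw3 : 3 ≤ w := by linarith
    have e1 : z + (k + 1 : ℝ) = w + 1 := by rw [hw]; ring
    have e2 : z - 1 + (k : ℝ) = w - 1 := by rw [hw]; ring
    have e3 : z - 1 + (k + 1 : ℝ) = w := by rw [hw]; ring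
    rw [e1, e2, e3, ← hw]
    have g1 := lg_succ w (by linarith)
    have g2 := lg_succ (w - s) (by linarith)
    have e4 : w + 1 - s = w - s + 1 := by ring
    have e5 : w + 1 - 1/2 = w + 1/2 := by ring
    rw [e4, e5, g1, g2]
    have a1 := L1 w s (by linarith) hs.le hs1
    have a2 := L2 w (by linarith)
    have a3 : |s * (Real.log (w + 1/2) - Real.log (w - 1/2) - 1/w)| ≤ s * (1 / w^3) := by
      rw [abs_mul, abs_of_pos hs]; gcongr
    have b1 : 2 * s^2 / w^2 ≤ 2 * s^2 / (w-1) - 2 * s^2 / w := by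
      have : 2 * s^2 / (w-1) - 2 * s^2 / w = 2 * s^2 / ((w-1)*w) := by
        have : w - 1 ≠ 0 := by linarith
        field_simp; ring
      rw [this]
      apply div_le_div_of_nonneg_left (by positivity)
      · nlinarith
      · nlinarith
    have b2 : s * (1 / w^3) ≤ s / (w-1)^2 - s / w^2 := by
      have : s / (w-1)^2 - s / w^2 - s * (1 / w^3) = s * (w*(2*w-1) - (w-1)^2) / ((w-1)^2*w^3) := by
        have : w - 1 ≠ 0 := by linarith
        field_simp; ring
      have : 0 ≤ s / (w-1)^2 - s / w^2 - s * (1 / w^3) := by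
        rw [this]
        apply div_nonneg
        · apply mul_nonneg hs.le; nlinarith
        · positivity
      linarith
    have e6 : s * (Real.log (w + 1/2) - Real.log (w - 1/2) - 1/w)
      = s * Real.log (w + 1/2) - s * Real.log (w - 1/2) - s/w := by ring
    rw [e6] at a3
    rw [abs_le] at *
    constructor <;> linarith
  · refine squeeze_zero_norm (a := fun k : ℕ => 2 / ((z - 2) + k)) ?_ (tendsto_aux _ _)
    intro k
    have hk : (0:ℝ) ≤ k := by positivity
    obtain ⟨w, hw⟩ : ∃ w, w = z + k := ⟨_, rfl⟩
    have hw3 : 3 ≤ w := by linarith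
    have e2 : z - 2 + (k : ℝ) = w - 2 := by rw [hw]; ring
    rw [e2, ← hw, Real.norm_eq_abs]
    have u := lg_up w s hs (by linarith)
    have l := lg_lo w s hs (by linarith)
    have d1 := log_diff_le (w - 1/2) w (by linarith) (by linarith)
    have d2 := log_diff_le (w - 2) (w-1/2) (by linarith) (by linarith)
    have d3 : Real.log (w - 2) ≤ Real.log (w - s - 1) := Real.log_le_log (by linarith) (by linarith)
    have d4 : (w - (w - 1/2)) / (w - 1/2) ≤ 2 / (w - 2) := by
      apply div_le_div₀ <;> linarith
    have d5 : (w - 1/2 - (w-2)) / (w - 2) ≤ 2 / (w - 2) := by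
      apply div_le_div₀ <;> linarith
    have pp : 0 ≤ 2 / (w - 2) := div_nonneg (by norm_num) (by linarith)
    have m1 : s * (Real.log w - Real.log (w - 1/2)) ≤ 1 * (2 / (w-2)) := by
      refine (mul_le_mul_of_nonneg_left (d1.trans d4) hs.le).trans ?_
      gcongr
    have m2 : s * (Real.log (w-1/2) - Real.log (w - s - 1)) ≤ 1 * (2 / (w-2)) := by
      refine (mul_le_mul_of_nonneg_left (by linarith : _ ≤ 2 / (w-2)) hs.le).trans ?_
      gcongr
    rw [abs_le]
    constructor <;> linarith
  · simpa using (tendsto_aux (2*s^2) (z-1)).add (tendsto_aux_pow s (z-1) 2 (by norm_num))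

set_option maxHeartbeats 1000000 in
theorem D2 (x h : ℝ) (hx : 3 ≤ x) (hh : 0 < h) (hh1 : h ≤ 1/2) :
    |lg (x + h) - 2 * lg x + lg (x - h) - h^2 / (x - 1/2)| ≤ 3 * h^2 / (x - 1)^3 := by
  have key := tele_bound
    (fun k => lg (x + k + h) - 2 * lg (x + k) + lg (x + k - h) - h^2 / (x + k - 1/2))
    (fun k => 3 * h^2 / ((x - 1) + k)^3) ?_ ?_ ?_
  · simpa using key
  · intro k
    push_cast
    have hk : (0:ℝ) ≤ k := by positivity
    obtain ⟨w, hw⟩ : ∃ w, w = x + k := ⟨_, rfl⟩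
    have hw3 : 3 ≤ w := by linarith
    have e1 : x + (k + 1 : ℝ) = w + 1 := by rw [hw]; ring
    have e2 : x - 1 + (k : ℝ) = w - 1 := by rw [hw]; ring
    have e3 : x - 1 + (k + 1 : ℝ) = w := by rw [hw]; ring
    rw [e1, e2, e3, ← hw]
    have g1 := lg_succ w (by linarith)
    have g2 := lg_succ (w - h) (by linarith)
    have g3 := lg_succ (w + h) (by linarith)
    have e4 : w + 1 - h = w - h + 1 := by ring
    have e4' : w + 1 + h = w + h + 1 := by ring
    have e5 : w + 1 - 1/2 = w + 1/2 := by ring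
    rw [e4, e4', e5, g1, g2, g3]
    have hw0 : 0 < w := by linarith
    have hq : h^2 / w^2 ≤ 1/2 := by
      rw [div_le_iff₀ (by positivity)]; nlinarith
    have a1 := log_one_sub_bd1 (h^2/w^2) (by positivity) hq
    have e6 : 1 - h^2/w^2 = ((w+h)*(w-h)) / (w*w) := by field_simp; ring
    rw [e6, Real.log_div (by nlinarith) (by positivity), Real.log_mul (by linarith) (by linarith),
      Real.log_mul hw0.ne' hw0.ne'] at a1
    have b1 : 2 * (h^2/w^2)^2 ≤ h^2 / w^4 := by
      have : 2 * (h^2/w^2)^2 = (2*h^2) * (h^2 / w^4) := by field_simp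
      rw [this]
      apply mul_le_of_le_one_left (by positivity)
      nlinarith
    have b2 : |h^2/(w-1/2) - h^2/(w+1/2) - h^2/w^2| ≤ h^2/w^4 := by
      have : h^2/(w-1/2) - h^2/(w+1/2) - h^2/w^2 = h^2 / (w^2*(4*w^2-1)) := by
        have h1 : 2*w - 1 ≠ 0 := by linarith
        have h2 : 2*w + 1 ≠ 0 := by linarith
        have h3 : 4*w^2 - 1 = (2*w-1)*(2*w+1) := by ring
        have h4 : w - 1/2 = (2*w-1)/2 := by ring
        have h5 : w + 1/2 = (2*w+1)/2 := by ring
        rw [h3, h4, h5]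
        field_simp; ring
      have h3 : 0 < 4*w^2 - 1 := by nlinarith
      rw [this, abs_of_nonneg (by positivity)]
      apply div_le_div_of_nonneg_left (by positivity) (by positivity)
      nlinarith [sq_nonneg w]
    have b3 : 3 * (h^2 / w^4) ≤ 3*h^2/(w-1)^3 - 3*h^2/w^3 := by
      have : 3*h^2/(w-1)^3 - 3*h^2/w^3 - 3 * (h^2 / w^4) = 3*h^2*(w^4 - w*(w-1)^3 - (w-1)^3)/((w-1)^3*w^4) := by
        have : w - 1 ≠ 0 := by linarith
        field_simp
      have : 0 ≤ 3*h^2/(w-1)^3 - 3*h^2/w^3 - 3 * (h^2 / w^4) := by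
        rw [this]
        have : 0 < w - 1 := by linarith
        have : 0 ≤ w^4 - w*(w-1)^3 - (w-1)^3 := by nlinarith [pow_pos hw0 3]
        positivity
      linarith
    have : 0 ≤ h^2 / w^4 := by positivity
    rw [abs_le] at *
    constructor <;> linarith
  · refine squeeze_zero_norm (a := fun k : ℕ => 3 / ((x - 2) + k)) ?_ (tendsto_aux _ _)
    intro k
    have hk : (0:ℝ) ≤ k := by positivity
    obtain ⟨w, hw⟩ : ∃ w, w = x + k := ⟨_, rfl⟩
    have hw3 : 3 ≤ w := by linarith
    have e2 : x - 2 + (k : ℝ) = w - 2 := by rw [hw]; ring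
    rw [e2, ← hw, Real.norm_eq_abs]
    have u := lg_up w h hh (by linarith)
    have l := lg_lo w h hh (by linarith)
    have u2 := lg_up (w+h) h hh (by linarith)
    have l2 := lg_lo (w+h) h hh (by linarith)
    rw [add_sub_cancel_right] at u2 l2
    have d1 := log_diff_le (w - 2) (w+1) (by linarith) (by linarith)
    have d2 : Real.log w ≤ Real.log (w+1) := Real.log_le_log (by linarith) (by linarith)
    have d6 : Real.log (w+h) ≤ Real.log (w+1) := Real.log_le_log (by linarith) (by linarith)
    have d3 : Real.log (w - 2) ≤ Real.log (w - h - 1) := Real.log_le_log (by linarith) (by linarith)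
    have d7 : Real.log (w - 2) ≤ Real.log (w - 1) := Real.log_le_log (by linarith) (by linarith)
    have d4 : (w + 1 - (w - 2)) / (w - 2) = 3 * (1 / (w-2)) := by ring
    rw [d4] at d1
    have pp : 0 < 1 / (w - 2) := by apply div_pos <;> linarith
    have f1 : h * (Real.log (w+h) - Real.log (w - h - 1)) ≤ (1/2) * (3 * (1 / (w-2))) := by
      refine (mul_le_mul_of_nonneg_left (by linarith : _ ≤ 3 * (1 / (w-2))) hh.le).trans ?_
      gcongr
    have f2 : h * (Real.log w - Real.log (w - 1)) ≤ (1/2) * (3 * (1 / (w-2))) := by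
      refine (mul_le_mul_of_nonneg_left (by linarith : _ ≤ 3 * (1 / (w-2))) hh.le).trans ?_
      gcongr
    have f3 : h^2 / (w - 1/2) ≤ 1 / (w-2) := by
      apply div_le_div₀ <;> nlinarith
    have f4 : 0 ≤ h^2 / (w - 1/2) := div_nonneg (by positivity) (by linarith)
    have f5 : 3 / (w-2) = 3 * (1/(w-2)) := by ring
    rw [f5, abs_le]
    constructor <;> linarith
  · exact tendsto_aux_pow (3*h^2) (x-1) 3 (by norm_num)

theorem sum_tele_bound (F G : ℕ → ℝ) (B : ℝ) (n : ℕ)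
    (h : ∀ j, |F j - (G (j+1) - G j)| ≤ B) :
    |∑ j ∈ Finset.range n, F j - (G n - G 0)| ≤ n * B := by
  rw [← Finset.sum_range_sub, ← Finset.sum_sub_distrib]
  refine (Finset.abs_sum_le_sum_abs _ _).trans ?_
  refine (Finset.sum_le_sum fun j _ => h j).trans ?_
  simp

theorem SA (q : ℝ) (n : ℕ) (h : ℝ) (hq : 4 ≤ q) (hh : 0 < h) (hh1 : h ≤ 1/2) :
    |∑ j ∈ Finset.range n, (lg (q+1+j) - 2 * lg (q+1+j-h) + lg (q+1+j-2*h))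
      - h^2 * (Real.log (q+n) - Real.log q)| ≤ h^2 * (4 * n / (q-1)^3 + 2 * h / (q-1)) := by
  have h1 := sum_tele_bound (fun j => lg (q+1+j) - 2 * lg (q+1+j-h) + lg (q+1+j-2*h))
    (fun j => h^2 * Real.log (q - h + j)) (4 * h^2 / (q-1)^3) n ?_
  · have d1 := log_diff_le (q-h) q (by linarith) (by linarith)
    have d1' : Real.log (q-h) ≤ Real.log q := Real.log_le_log (by linarith) (by linarith)
    have hn : (0:ℝ) ≤ n := by positivity
    have d2 := log_diff_le (q+n-h) (q+n) (by linarith) (by linarith)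
    have d2' : Real.log (q+n-h) ≤ Real.log (q+n) := Real.log_le_log (by linarith) (by linarith)
    have f1 : (q - (q-h))/(q-h) ≤ h / (q-1) := by apply div_le_div₀ <;> linarith
    have f2 : (q + n - (q+n-h))/(q+n-h) ≤ h / (q-1) := by apply div_le_div₀ <;> linarith
    simp only [Nat.cast_zero, add_zero] at h1
    have e : q - h + n = q + n - h := by ring
    rw [e] at h1
    have k : |(Real.log (q+n-h) - Real.log (q-h)) - (Real.log (q+n) - Real.log q)| ≤ 2 * h / (q-1) := by
      have : 0 ≤ h / (q-1) := div_nonneg hh.le (by linarith)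
      have : 2 * h / (q-1) = 2 * (h/(q-1)) := by ring
      rw [this, abs_le]; constructor <;> linarith
    have k2 : |h^2 * ((Real.log (q+n-h) - Real.log (q-h)) - (Real.log (q+n) - Real.log q))| ≤ h^2 * (2 * h / (q-1)) := by
      rw [abs_mul, abs_of_pos (by positivity : 0 < h^2)]; gcongr
    have e3 : h^2 * (4 * n / (q-1)^3 + 2 * h / (q-1)) = n * (4 * h^2 / (q-1)^3) + h^2 * (2 * h / (q-1)) := by ring
    rw [e3]
    refine le_trans (le_of_eq_of_le ?_ (abs_add_le _ _)) (add_le_add h1 k2)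
    congr 1; ring
  · intro j
    push_cast
    have hj : (0:ℝ) ≤ j := by positivity
    obtain ⟨w, hw⟩ : ∃ w : ℝ, w = q + j + 1/2 - h := ⟨_, rfl⟩
    have e1 : q - h + (j + 1 : ℝ) = w + 1/2 := by rw [hw]; ring
    have e2 : q - h + (j : ℝ) = w - 1/2 := by rw [hw]; ring
    have a := D2 (w+1/2) h (by linarith) hh hh1
    have e3 : q + 1 + (j:ℝ) = w + 1/2 + h := by rw [hw]; ring
    rw [e1, e2, e3]
    have e4 : w + 1/2 + h - h = w + 1/2 := by ring
    have e5 : w + 1/2 + h - 2*h = w + 1/2 - h := by ring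
    have e6 : w + 1/2 - 1/2 = w := by ring
    rw [e4, e5]
    rw [e6] at a
    have b := L2 w (by linarith)
    have b2 : |h^2 * (Real.log (w + 1/2) - Real.log (w - 1/2) - 1/w)| ≤ h^2 * (1/w^3) := by
      rw [abs_mul, abs_of_pos (by positivity : 0 < h^2)]; gcongr
    have hq0 : 0 < q - 1 := by linarith
    have c1 : 3 * h^2 / (w + 1/2 - 1)^3 ≤ 3 * h^2 / (q-1)^3 := by
      apply div_le_div_of_nonneg_left (by positivity) (by positivity)
      apply pow_le_pow_left₀ (by linarith); linarith
    have c2 : h^2 * (1/w^3) ≤ h^2 / (q-1)^3 := by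
      rw [mul_one_div]
      apply div_le_div_of_nonneg_left (by positivity) (by positivity)
      apply pow_le_pow_left₀ (by linarith); linarith
    have c3 : 4 * h^2 / (q-1)^3 = 3 * h^2 / (q-1)^3 + h^2 / (q-1)^3 := by ring
    have c4 : h^2 * (Real.log (w + 1/2) - Real.log (w - 1/2) - 1/w)
      = h^2 * Real.log (w + 1/2) - h^2 * Real.log (w - 1/2) - h^2/w := by ring
    rw [c4] at b2
    rw [c3]
    rw [abs_le] at *
    constructor <;> linarith

theorem SB (q : ℝ) (n : ℕ) (s : ℝ) (hq : 4 ≤ q) (hs : 0 < s) (hs1 : s ≤ 1) :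
    |∑ j ∈ Finset.range n, (lg (q+1+j) - lg (q+1+j-s))
      - s * (HH (q+n) - HH q)| ≤ n * (2 * s^2 / q + 2 * s / q^2) := by
  have h1 := sum_tele_bound (fun j => lg (q+1+j) - lg (q+1+j-s))
    (fun j => s * HH (q + j)) (2 * s^2 / q + 2 * s / q^2) n ?_
  · simp only [Nat.cast_zero, add_zero] at h1
    rwa [mul_sub]
  · intro j
    push_cast
    have hj : (0:ℝ) ≤ j := by positivity
    obtain ⟨w, hw⟩ : ∃ w : ℝ, w = q + j + 1/2 := ⟨_, rfl⟩
    have e1 : q + (j + 1 : ℝ) = w + 1/2 := by rw [hw]; ring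
    have e2 : q + (j : ℝ) = w - 1/2 := by rw [hw]; ring
    have a := D1 (w+1/2) s (by linarith) hs hs1
    have e3 : q + 1 + (j:ℝ) = w + 1/2 := by rw [hw]; ring
    rw [e1, e2, e3]
    have e6 : w + 1/2 - 1/2 = w := by ring
    rw [e6] at a
    have b := L3 w (by linarith)
    have b2 : |s * (HH (w + 1/2) - HH (w - 1/2) - Real.log w)| ≤ s * (1/w^2) := by
      rw [abs_mul, abs_of_pos hs]; gcongr
    have hq0 : 0 < q := by linarith
    have c1 : 2 * s^2 / (w + 1/2 - 1) ≤ 2 * s^2 / q := by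
      apply div_le_div_of_nonneg_left (by positivity) (by positivity)
      linarith
    have c2 : s * (1/w^2) ≤ s / q^2 := by
      rw [mul_one_div]
      apply div_le_div_of_nonneg_left (by positivity) (by positivity)
      apply pow_le_pow_left₀ (by linarith); linarith
    have c5 : s / (w + 1/2 - 1)^2 ≤ s / q^2 := by
      apply div_le_div_of_nonneg_left (by positivity) (by positivity)
      apply pow_le_pow_left₀ (by linarith); linarith
    have c3 : 2 * s / q^2 = s / q^2 + s / q^2 := by ring
    rw [c3]
    rw [abs_le] at *
    constructor <;> linarith

theorem PP_pos (p n m : ℕ) (hq : 4 ≤ (m:ℝ) - n) (hs : (p:ℝ)/n ≤ 1) : 0 < PP p n m := by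
  unfold PP
  refine Finset.prod_pos fun j _ => ?_
  have hj : (0:ℝ) ≤ j := by positivity
  apply div_pos <;> apply Real.Gamma_pos_of_pos <;> linarith

theorem log_PP (p n m : ℕ) (hq : 4 ≤ (m:ℝ) - n) (hs : (p:ℝ)/n ≤ 1) :
    Real.log (PP p n m) = ∑ j ∈ Finset.range n,
      (lg ((m:ℝ) - n + 1 + j - p/n) - lg ((m:ℝ) - n + 1 + j)) := by
  unfold PP lg
  have pos : ∀ j : ℕ, 0 < (m:ℝ) - n + 1 - p/n + j := fun j => by
    have hj : (0:ℝ) ≤ j := by positivity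
    linarith
  have pos2 : ∀ j : ℕ, 0 < (m:ℝ) - n + 1 + j := fun j => by
    have hj : (0:ℝ) ≤ j := by positivity
    linarith
  rw [Real.log_prod]
  · refine Finset.sum_congr rfl fun j _ => ?_
    rw [Real.log_div (Real.Gamma_pos_of_pos (pos j)).ne' (Real.Gamma_pos_of_pos (pos2 j)).ne']
    have : (m:ℝ) - n + 1 - p/n + j = (m:ℝ) - n + 1 + j - p/n := by ring
    rw [this]
  · intro j _
    exact (div_pos (Real.Gamma_pos_of_pos (pos j)) (Real.Gamma_pos_of_pos (pos2 j))).ne'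

theorem asympA (a b t : ℕ) (ha : 0 < a) (hab : a < b) (ht : 8 ≤ t) :
    |Real.log (PP 2 (a*t) (b*t)) - 2 * Real.log (PP 1 (a*t) (b*t))
      - Real.log (1 / (1 - (a:ℝ)/b)) / ((a:ℝ)*t)^2| ≤ (32 * a + 4) / (t:ℝ)^4 := by
  have ha' : (1:ℝ) ≤ a := by exact_mod_cast ha
  have hab' : (a:ℝ) + 1 ≤ b := by exact_mod_cast hab
  have ht' : (8:ℝ) ≤ t := by exact_mod_cast ht
  have hat : (t:ℝ) ≤ a * t := by nlinarith
  have hq : (t:ℝ) ≤ b * t - a * t := by nlinarith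
  have hn0 : (0:ℝ) < a * t := by linarith
  have hh2 : (2:ℝ) / (a*t) ≤ 1 := by rw [div_le_one hn0]; linarith
  have hh1 : (1:ℝ) / (a*t) ≤ 1/2 := by
    have : (2:ℝ) / (a*t) = 2 * (1/(a*t)) := by ring
    linarith
  rw [log_PP 2 (a*t) (b*t) (by push_cast; linarith) (by push_cast; linarith),
    log_PP 1 (a*t) (b*t) (by push_cast; linarith) (by push_cast; linarith)]
  have key := SA ((b:ℝ)*t - a*t) (a*t) (1/(a*t)) (by linarith) (by positivity) hh1
  rw [Finset.mul_sum, ← Finset.sum_sub_distrib]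
  push_cast at key ⊢
  have e : (1/((a:ℝ)*t))^2 * (Real.log (b*t - a*t + a*t) - Real.log (b*t - a*t)) =
      Real.log (1 / (1 - (a:ℝ)/b)) / ((a:ℝ)*t)^2 := by
    rw [← Real.log_div (by linarith) (by linarith)]
    have : ((b:ℝ)*t - a*t + a*t) / (b*t - a*t) = 1 / (1 - (a:ℝ)/b) := by
      have : (b:ℝ) - a ≠ 0 := by linarith
      have : (b:ℝ) ≠ 0 := by linarith
      have h3 : (b:ℝ)*t - a*t = (b-a)*t := by ring
      rw [h3]
      field_simp
      ring
    rw [this]; ring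
  rw [e] at key
  have key2 : (1/((a:ℝ)*t))^2 * (4 * (a*t) / (b*t - a*t - 1)^3 + 2 * (1/(a*t)) / (b*t-a*t-1))
      ≤ (32 * a + 4) / (t:ℝ)^4 := by
    have t0 : (0:ℝ) < t := by linarith
    have u1 : 1/((a:ℝ)*t) ≤ 1/t := by
      apply div_le_div_of_nonneg_left <;> linarith
    have u2 : (4 * (a*t) : ℝ) / (b*t - a*t - 1)^3 ≤ 4 * (a*t) / (t/2)^3 := by
      apply div_le_div_of_nonneg_left (by positivity) (by positivity)
      apply pow_le_pow_left₀ (by linarith); linarith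
    have u3 : 2 * (1/((a:ℝ)*t)) / (b*t-a*t-1) ≤ 2 * (1/t) / (t/2) := by
      apply div_le_div₀ <;> first | positivity | linarith
    calc _ ≤ (1/(t:ℝ))^2 * (4 * (a*t) / (t/2)^3 + 2 * (1/t) / (t/2)) := by
          apply mul_le_mul
          · exact pow_le_pow_left₀ (by positivity) u1 2
          · linarith
          · have : (0:ℝ) < b*t - a*t - 1 := by linarith
            positivity
          · positivity
      _ = _ := by field_simp; ring
  refine le_of_eq_of_le ?_ (key.trans key2)
  congr 2
  refine Finset.sum_congr rfl fun j _ => ?_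
  have : (2:ℝ) * (1/(a*t)) = 2/(a*t) := by ring
  rw [this]
  ring

theorem asympB (a b t : ℕ) (ha : 0 < a) (hab : a < b) (ht : 8 ≤ t) :
    |Real.log (((b:ℝ)*t)^2 * PP 2 (a*t) (b*t)) -
      (2 + 2 * (1 - (a : ℝ) / b) / ((a : ℝ) / b) * Real.log (1 - (a:ℝ)/b))| ≤ 12 / (t:ℝ)^2 := by
  have ha' : (1:ℝ) ≤ a := by exact_mod_cast ha
  have hab' : (a:ℝ) + 1 ≤ b := by exact_mod_cast hab
  have ht' : (8:ℝ) ≤ t := by exact_mod_cast ht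
  have t0 : (0:ℝ) < t := by linarith
  have b0 : (0:ℝ) < b := by linarith
  have hat : (t:ℝ) ≤ a * t := by nlinarith
  have hq : (t:ℝ) ≤ b * t - a * t := by nlinarith
  have hn0 : (0:ℝ) < a * t := by linarith
  have hh2 : (2:ℝ) / (a*t) ≤ 1 := by rw [div_le_one hn0]; linarith
  have hP := PP_pos 2 (a*t) (b*t) (by push_cast; linarith) (by push_cast; linarith)
  rw [Real.log_mul (by positivity) hP.ne', Real.log_pow]
  rw [log_PP 2 (a*t) (b*t) (by push_cast; linarith) (by push_cast; linarith)]
  have key := SB ((b:ℝ)*t - a*t) (a*t) (2/(a*t)) (by linarith) (by positivity) hh2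
  push_cast at key ⊢
  have e : (2/((a:ℝ)*t)) * (HH (b*t - a*t + a*t) - HH (b*t - a*t)) =
      2 * Real.log (b * t) - (2 + 2 * (1 - (a : ℝ) / b) / ((a : ℝ) / b) * Real.log (1 - (a:ℝ)/b)) := by
    unfold HH
    have h1 : (1 - (a:ℝ)/b) ≠ 0 := by
      have : (a:ℝ)/b < 1 := by rw [div_lt_one b0]; linarith
      linarith
    have h2 : (b:ℝ)*t - a*t = (b*t) * (1 - (a:ℝ)/b) := by field_simp
    have h3 : Real.log ((b:ℝ)*t - a*t) = Real.log (b*t) + Real.log (1 - (a:ℝ)/b) := by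
      rw [h2, Real.log_mul (by positivity) h1]
    rw [sub_add_cancel, h3]
    generalize Real.log (1 - (a:ℝ)/b) = l1
    generalize Real.log ((b:ℝ)*t) = l2
    field_simp
    ring
  rw [e] at key
  have key2 : (a*t:ℝ) * (2 * (2/((a:ℝ)*t))^2 / (b*t - a*t) + 2 * (2/(a*t)) / (b*t-a*t)^2)
      ≤ 12 / (t:ℝ)^2 := by
    have e1 : (a*t:ℝ) * (2 * (2/((a:ℝ)*t))^2 / (b*t - a*t) + 2 * (2/(a*t)) / (b*t-a*t)^2)
      = 8 / ((a*t)*(b*t-a*t)) + 4 / (b*t-a*t)^2 := by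
      have : (b:ℝ)*t - a*t ≠ 0 := by linarith
      generalize (b:ℝ)*t - a*t = q at *
      generalize (a:ℝ)*t = N at *
      field_simp; ring
    rw [e1]
    have u1 : 8 / (((a:ℝ)*t)*(b*t-a*t)) ≤ 8 / (t:ℝ)^2 := by
      apply div_le_div_of_nonneg_left (by norm_num) (by positivity)
      rw [sq]; apply mul_le_mul <;> linarith
    have u2 : 4 / ((b:ℝ)*t-a*t)^2 ≤ 4 / (t:ℝ)^2 := by
      apply div_le_div_of_nonneg_left (by norm_num) (by positivity)
      apply pow_le_pow_left₀ (by linarith); linarith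
    calc _ ≤ _ := add_le_add u1 u2
      _ = _ := by ring
  rw [abs_sub_comm] at key
  refine le_of_eq_of_le ?_ (key.trans key2)
  congr 1
  have : ∑ j ∈ Finset.range (a*t), (lg ((b:ℝ)*t - a*t + 1 + j - 2/(a*t)) - lg ((b:ℝ)*t - a*t + 1 + j))
    = - ∑ j ∈ Finset.range (a*t), (lg ((b:ℝ)*t - a*t + 1 + j) - lg ((b:ℝ)*t - a*t + 1 + j - 2/(a*t))) := by
    rw [← Finset.sum_neg_distrib]
    refine Finset.sum_congr rfl fun j _ => by ring
  rw [this]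
  ring

theorem abs_prod_diff (U U0 G G0 A B : ℝ) (h1 : |U - U0| ≤ A) (h2 : |G - G0| ≤ B) :
    |U * G - U0 * G0| ≤ A * (|G0| + B) + |U0| * B := by
  have e : U * G - U0 * G0 = (U - U0) * (G0 + (G - G0)) + U0 * (G - G0) := by ring
  have hA : 0 ≤ A := (abs_nonneg _).trans h1
  rw [e]
  refine (abs_add_le _ _).trans ?_
  rw [abs_mul, abs_mul]
  gcongr
  exact (abs_add_le _ _).trans (by gcongr)

theorem R_bound (N x rho L K : ℝ) (hx : 0 ≤ x) (hL : 0 ≤ L) (hK : 0 ≤ K) (a : ℝ)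
    (ha : 1 ≤ a) (hN : 0 < N) (hNx : N^2 * x = a^2)
    (h : |rho - L / N^2| ≤ K * x^2) (hx1 : x ≤ 1) (hs : (L + K) * x ≤ 1) :
    |N^2 * (1 - Real.exp (-rho)) - L| ≤ a^2 * ((L+K)^2 + K) * x := by
  have hN2 : 0 < N^2 := by positivity
  have b1 : L / N^2 ≤ L * x := by
    rw [div_le_iff₀ hN2]
    have : L * x * N^2 = L * a^2 := by rw [← hNx]; ring
    rw [this]
    nlinarith [mul_nonneg hL (by nlinarith : 0 ≤ a^2 - 1)]
  have b0 : 0 ≤ L / N^2 := by positivity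
  have b2 : K * x^2 ≤ K * x := by
    apply mul_le_mul_of_nonneg_left _ hK; nlinarith
  have hr : |rho| ≤ (L + K) * x := by
    rw [abs_le] at *; constructor <;> nlinarith
  have he := Real.abs_exp_sub_one_sub_id_le (x := -rho) (by rw [abs_neg]; linarith)
  have hsq : (-rho)^2 ≤ ((L+K)*x)^2 := by
    rw [neg_sq, ← sq_abs]; exact pow_le_pow_left₀ (abs_nonneg _) hr 2
  have e : N^2 * (1 - Real.exp (-rho)) - L = N^2 * (-(Real.exp (-rho) - 1 - -rho) + (rho - L / N^2)) := by
    field_simp; ring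
  rw [e, abs_mul, abs_of_pos hN2]
  have : |-(Real.exp (-rho) - 1 - -rho) + (rho - L / N^2)| ≤ ((L+K)^2 + K) * x^2 := by
    refine (abs_add_le _ _).trans ?_
    rw [abs_neg]
    calc _ ≤ ((L+K)*x)^2 + K * x^2 := add_le_add (he.trans hsq) h
      _ = _ := by ring
  calc _ ≤ N^2 * (((L+K)^2 + K) * x^2) := by gcongr
    _ = (N^2 * x) * ((L+K)^2 + K) * x := by ring
    _ = _ := by rw [hNx]

theorem G_bound (X L c e x K1 : ℝ) (hX : |X - L| ≤ K1 * x) (hL : 0 ≤ L) (hc0 : 0 ≤ c) (hc : c ≤ 1)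
    (he0 : 0 ≤ e) (hex : e ≤ x) (he1 : e ≤ 1) :
    |X * (1-e)^2 - 2*c + 3*c*e - (L - 2*c)| ≤ (K1 + 2 * L + 3) * x := by
  have e1 : X * (1-e)^2 - 2*c + 3*c*e - (L - 2*c) = (X - L) * (1-e)^2 + (L * ((1-e)^2 - 1) + 3*c*e) := by ring
  have h1 : |(X - L) * (1-e)^2| ≤ K1 * x := by
    rw [abs_mul, abs_of_nonneg (sq_nonneg (1-e))]
    refine le_trans ?_ hX
    apply mul_le_of_le_one_right (abs_nonneg _)
    nlinarith
  have h2 : |L * ((1-e)^2 - 1) + 3*c*e| ≤ (2*L+3)*x := by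
    have a1 : L * e ≤ L * x := by gcongr
    have a2 : c * e ≤ 1 * x := by gcongr
    have a3 : 0 ≤ c * e := by positivity
    have a4 : 0 ≤ L * e := by positivity
    have a5 : L * e * e ≤ L * e := mul_le_of_le_one_right a4 he1
    have a6 : 0 ≤ L * e * e := by positivity
    rw [abs_le]; constructor <;> nlinarith
  rw [e1]
  refine (abs_add_le _ _).trans ?_
  linarith

set_option maxHeartbeats 2000000 in
theorem alphabeta (a b : ℕ) (ha : 0 < a) (hab : a < b) :
    ∃ K : ℝ, 0 ≤ K ∧ ∃ T : ℕ, 8 ≤ T ∧ ∀ t : ℕ, T ≤ t →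
      |((a:ℝ)*t)^2 * (PP 2 (a*t) (b*t) * ((b:ℝ)*t - 2/(a*t))^2
          - PP 1 (a*t) (b*t) ^2 * ((b:ℝ)*t - 1/(a*t))^2)
        - Real.exp 1 ^ 2 * (1 - (a : ℝ) / b) ^ (2 * (1 - (a : ℝ) / b) / ((a : ℝ) / b))
          * (Real.log (1 / (1 - (a : ℝ) / b)) - 2 * ((a : ℝ) / b))| ≤ K * (1/(t:ℝ)^2) ∧
      |((a:ℝ)*t) * ((b:ℝ)*t - 2/(a*t)) * PP 2 (a*t) (b*t)
        - Real.exp 1 ^ 2 * (1 - (a : ℝ) / b) ^ (2 * (1 - (a : ℝ) / b) / ((a : ℝ) / b))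
          * ((a : ℝ) / b)| ≤ K * (1/(t:ℝ)^2) := by
  have ha' : (1:ℝ) ≤ a := by exact_mod_cast ha
  have hab' : (a:ℝ) + 1 ≤ b := by exact_mod_cast hab
  have b0 : (0:ℝ) < b := by linarith
  obtain ⟨c, hc⟩ : ∃ c : ℝ, c = (a:ℝ)/b := ⟨_, rfl⟩
  have hc0 : 0 < c := by rw [hc]; positivity
  have hc1 : c < 1 := by rw [hc, div_lt_one b0]; linarith
  obtain ⟨L, hL⟩ : ∃ L : ℝ, L = Real.log (1 / (1 - c)) := ⟨_, rfl⟩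
  have hL0 : 0 ≤ L := by
    rw [hL]; apply Real.log_nonneg
    rw [le_div_iff₀ (by linarith)]; linarith
  obtain ⟨E, hE⟩ : ∃ E : ℝ, E = Real.exp 1 ^ 2 * (1 - c) ^ (2 * (1 - c) / c) := ⟨_, rfl⟩
  have hcp : 0 < (1 - c) ^ (2 * (1 - c) / c) := Real.rpow_pos_of_pos (by linarith) _
  have hE0 : 0 < E := by rw [hE]; positivity
  have hlE : Real.log E = 2 + 2 * (1 - c) / c * Real.log (1 - c) := by
    rw [hE, Real.log_mul (by positivity) hcp.ne', Real.log_pow, Real.log_exp,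
      Real.log_rpow (by linarith)]
    push_cast; ring
  obtain ⟨K0, hK0⟩ : ∃ K : ℝ, K = 32 * a + 4 := ⟨_, rfl⟩
  have hK0p : 0 ≤ K0 := by rw [hK0]; positivity
  obtain ⟨K2, hK2⟩ : ∃ K : ℝ, K = (a:ℝ)^2 * ((L+K0)^2 + K0) + 2 * L + 3 := ⟨_, rfl⟩
  have hK2p : 0 ≤ K2 := by rw [hK2]; positivity
  rw [← hc, ← hL, ← hE]
  obtain ⟨Ka, hKa⟩ : ∃ K : ℝ, K = 24 * E * (|L - 2 * c| + K2) + E * K2 := ⟨_, rfl⟩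
  obtain ⟨Kb, hKb⟩ : ∃ K : ℝ, K = 24 * E * (c + 2) + E * 2 := ⟨_, rfl⟩
  have hKap : 0 ≤ Ka := by rw [hKa]; positivity
  have hKbp : 0 ≤ Kb := by rw [hKb]; positivity
  refine ⟨Ka + Kb, by positivity, max 8 ⌈L + K0⌉₊, le_max_left _ _, fun t ht => ?_⟩
  have ht8 : 8 ≤ t := (le_max_left _ _).trans ht
  have htL : L + K0 ≤ t := (Nat.le_ceil _).trans (by exact_mod_cast (le_max_right _ _).trans ht)
  have ht' : (8:ℝ) ≤ t := by exact_mod_cast ht8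
  have t0 : (0:ℝ) < t := by linarith
  have hat : (t:ℝ) ≤ a * t := le_mul_of_one_le_left t0.le ha'
  have hbt : (t:ℝ) ≤ b * t := le_mul_of_one_le_left t0.le (by linarith)
  have hq : (t:ℝ) ≤ b * t - a * t := by
    rw [← sub_mul]; exact le_mul_of_one_le_left t0.le (by linarith)
  have hA := asympA a b t ha hab ht8
  have hB := asympB a b t ha hab ht8
  have hn0 : (0:ℝ) < a * t := by linarith
  have hh2 : (2:ℝ) / (a*t) ≤ 1 := by rw [div_le_one hn0]; linarith
  have hh1 : (1:ℝ) / (a*t) ≤ 1 := by rw [div_le_one hn0]; linarith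
  have hP2 := PP_pos 2 (a*t) (b*t) (by push_cast; linarith) (by push_cast; linarith)
  have hP1 := PP_pos 1 (a*t) (b*t) (by push_cast; linarith) (by push_cast; linarith)
  generalize PP 2 (a*t) (b*t) = P2 at *
  generalize PP 1 (a*t) (b*t) = P1 at *
  rw [← hc, ← hlE] at hB
  rw [← hc, ← hL, ← hK0] at hA
  have hmN : (a:ℝ) * t = c * (b * t) := by rw [hc]; field_simp
  have hm0 : (0:ℝ) < b * t := by positivity
  obtain ⟨N, hN⟩ : ∃ N : ℝ, N = (a:ℝ)*t := ⟨_, rfl⟩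
  obtain ⟨m, hm⟩ : ∃ m : ℝ, m = (b:ℝ)*t := ⟨_, rfl⟩
  obtain ⟨x, hx⟩ : ∃ x : ℝ, x = 1/(t:ℝ)^2 := ⟨_, rfl⟩
  have hx0 : 0 < x := by rw [hx]; positivity
  have hx1 : 64 * x ≤ 1 := by
    rw [hx, mul_one_div, div_le_one (by positivity)]
    have : (8:ℝ)^2 ≤ (t:ℝ)^2 := pow_le_pow_left₀ (by norm_num) ht' 2
    linarith
  have hNx : N^2 * x = (a:ℝ)^2 := by rw [hN, hx]; field_simp
  have hsx : (L + K0) * x ≤ 1 := by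
    rw [hx, mul_one_div, div_le_one (by positivity)]
    exact htL.trans (le_self_pow₀ (by linarith) (by norm_num))
  have hA' : |(Real.log P2 - 2 * Real.log P1) - L / N^2| ≤ K0 * x^2 := by
    rw [hN]; convert hA using 1; rw [hx]; field_simp
  have hB' : |Real.log (m^2 * P2) - Real.log E| ≤ 12 * x := by
    rw [hm]; convert hB using 1; rw [hx]; field_simp
  have hex : 1 / (N * m) ≤ x := by
    rw [hN, hm, hx]
    apply div_le_div_of_nonneg_left (by norm_num) (by positivity)
    rw [sq]; exact mul_le_mul hat hbt t0.le hn0.le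
  rw [← hN, ← hm, ← hx]
  rw [← hN, ← hm] at hmN
  rw [← hN] at hn0
  rw [← hm] at hm0
  have hR : P1^2 = P2 * Real.exp (-(Real.log P2 - 2 * Real.log P1)) := by
    have : -(Real.log P2 - 2 * Real.log P1) = 2 * Real.log P1 - Real.log P2 := by ring
    rw [this, Real.exp_sub, Real.exp_log hP2]
    have : 2 * Real.log P1 = Real.log (P1^2) := by rw [Real.log_pow]; push_cast; ring
    rw [this, Real.exp_log (by positivity)]
    field_simp
  have hX := R_bound N x _ L K0 hx0.le hL0 hK0p a ha' hn0 hNx hA' (by linarith) hsx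
  generalize Real.exp (-(Real.log P2 - 2 * Real.log P1)) = R at *
  have hU : |m^2 * P2 - E| ≤ 24 * E * x := by
    have h1 := Real.abs_exp_sub_one_le (x := Real.log (m^2*P2) - Real.log E) (by linarith)
    rw [Real.exp_sub, Real.exp_log (by positivity), Real.exp_log hE0] at h1
    have : m^2 * P2 - E = E * (m^2 * P2 / E - 1) := by field_simp
    rw [this, abs_mul, abs_of_pos hE0]
    calc _ ≤ E * (2 * (12 * x)) := by
          apply mul_le_mul_of_nonneg_left _ hE0.le; linarith
      _ = _ := by ring
  have he0 : 0 < 1 / (N * m) := by positivity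
  have hG := G_bound _ L c _ x _ hX hL0 hc0.le hc1.le he0.le hex (by linarith)
  rw [← hK2] at hG
  constructor
  · have e : N^2 * (P2 * (m - 2/N)^2 - P1^2 * (m - 1/N)^2) =
      (m^2 * P2) * (N^2 * (1 - R) * (1 - 1/(N*m))^2 - 2*c + 3*c*(1/(N*m))) := by
      have hc' : c = N / m := by rw [hmN]; field_simp
      rw [hR, hc']
      field_simp
      ring
    rw [e]
    refine (abs_prod_diff _ _ _ _ _ _ hU hG).trans ?_
    rw [abs_of_pos hE0]
    have : K2 * x ≤ K2 := mul_le_of_le_one_right hK2p (by linarith)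
    calc _ ≤ 24 * E * x * (|L - 2*c| + K2) + E * (K2 * x) := by gcongr
      _ = Ka * x := by rw [hKa]; ring
      _ ≤ _ := by rw [add_mul]; linarith [mul_nonneg hKbp hx0.le]
  · have e : N * (m - 2/N) * P2 = (m^2 * P2) * (c * (1 - 2 * (1/(N*m)))) := by
      have hc' : c = N / m := by rw [hmN]; field_simp
      rw [hc']
      field_simp
    rw [e]
    have hG2 : |c * (1 - 2 * (1/(N*m))) - c| ≤ 2 * x := by
      have : c * (1/(N*m)) ≤ 1 * x := by gcongr
      have : 0 ≤ c * (1/(N*m)) := by positivity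
      rw [abs_le]; constructor <;> linarith
    refine (abs_prod_diff _ _ _ _ _ _ hU hG2).trans ?_
    rw [abs_of_pos hE0, abs_of_pos hc0]
    have : 2 * x ≤ 2 := by linarith
    calc _ ≤ 24 * E * x * (c + 2) + E * (2 * x) := by gcongr
      _ = Kb * x := by rw [hKb]; ring
      _ ≤ _ := by rw [add_mul]; linarith [mul_nonneg hKap hx0.le]

theorem Psi1_bd (n : ℕ) (hn : 0 < n) (y : Fin n → ℝ) (N0 : ℝ) (h0 : 0 < N0) (hy : ∀ i, N0 ≤ y i) :
    0 ≤ Psi1 y ∧ Psi1 y ≤ N0⁻¹ := by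
  have hp : ∀ i, 0 ≤ y i ^ (-(1:ℝ)/n) := fun i => Real.rpow_nonneg (h0.le.trans (hy i)) _
  unfold Psi1
  refine ⟨Finset.prod_nonneg fun i _ => hp i, ?_⟩
  calc _ ≤ ∏ _i : Fin n, N0 ^ (-(1:ℝ)/n) := by
        refine Finset.prod_le_prod (fun i _ => hp i) fun i _ => ?_
        exact Real.rpow_le_rpow_of_nonpos h0 (hy i) (div_nonpos_of_nonpos_of_nonneg (by norm_num) (by positivity))
    _ = N0⁻¹ := by
        rw [Finset.prod_const, Finset.card_univ, Fintype.card_fin, ← Real.rpow_natCast,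
          ← Real.rpow_mul h0.le, ← Real.rpow_neg_one]
        congr 1
        field_simp

theorem PsiS_bd (n l : ℕ) (hn : 0 < n) (y : Fin n → ℝ) (Y : ℝ) (h0 : ∀ i, 0 < y i) (hy : ∀ i, y i ≤ Y) :
    0 ≤ PsiS l y ∧ PsiS l y ≤ Y ^ l := by
  unfold PsiS
  have hn' : (0:ℝ) < n := by exact_mod_cast hn
  refine ⟨mul_nonneg (by positivity) (Finset.sum_nonneg fun i _ => pow_nonneg (h0 i).le _), ?_⟩
  calc _ ≤ (1/(n:ℝ)) * ∑ _i : Fin n, Y ^ l := by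
        gcongr with i
        · exact (h0 i).le
        · exact hy i
    _ = _ := by simp; field_simp


/-- uniform asymptotic approximation of the variance (second cumulant) of
the GLRT statistic under `H₁`, uniformly over eigenvalue vectors `y` with entries in
`[N0, Y]`, along `n = a·t`, `m = b·t` with `c = a/b ∈ (0,1)`. -/
theorem mu1_variance_asymptotic (a b : ℕ) (ha : 0 < a) (hab : a < b)
    (N0 Y : ℝ) (hN0 : 0 < N0) (hNY : N0 ≤ Y) :
    ∃ C : ℝ, 0 < C ∧ ∃ T : ℕ, 0 < T ∧ ∀ t : ℕ, T ≤ t →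
      ∀ y : Fin (a * t) → ℝ, (∀ i, N0 ≤ y i) → (∀ i, y i ≤ Y) → Monotone y →
        |((a * t : ℕ) : ℝ) ^ 2 * (mu1 2 (a * t) (b * t) y - (mu1 1 (a * t) (b * t) y) ^ 2) -
            Psi1 y ^ 2 * Real.exp 1 ^ 2
              * (1 - (a : ℝ) / b) ^ (2 * (1 - (a : ℝ) / b) / ((a : ℝ) / b))
              * ((Real.log (1 / (1 - (a : ℝ) / b)) - 2 * ((a : ℝ) / b)) * PsiS 1 y ^ 2
                  + ((a : ℝ) / b) * PsiS 2 y)|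
          ≤ C / ((a * t : ℕ) : ℝ) ^ 2 := by
  obtain ⟨K, hK, T, hT, hab2⟩ := alphabeta a b ha hab
  refine ⟨(N0⁻¹)^2 * (K * Y^2 + K * Y^2) * a^2 + 1, by positivity, T, by omega, ?_⟩
  intro t ht y hy0 hyY _
  obtain ⟨h1, h2⟩ := hab2 t ht
  have ha' : (1:ℝ) ≤ a := by exact_mod_cast ha
  have hab' : (a:ℝ) + 1 ≤ b := by exact_mod_cast hab
  have ht8 : 8 ≤ t := hT.trans ht
  have ht' : (8:ℝ) ≤ t := by exact_mod_cast ht8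
  have t0 : (0:ℝ) < t := by linarith
  have hat : (t:ℝ) ≤ a * t := by nlinarith
  have hbt : (t:ℝ) ≤ b * t := by nlinarith
  have hn0 : (0:ℝ) < a * t := by linarith
  have hh2 : (2:ℝ) / (a*t) ≤ 1 := by rw [div_le_one hn0]; linarith
  have hh1 : (1:ℝ) / (a*t) ≤ 1 := by rw [div_le_one hn0]; linarith
  have hnn : 0 < a * t := Nat.mul_pos ha (by omega)
  have hyp : ∀ i, 0 < y i := fun i => hN0.trans_le (hy0 i)
  rw [mu1_one (a*t) (b*t) y hnn (by push_cast; linarith),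
    mu1_two (a*t) (b*t) y hyp hnn (by push_cast; linarith)]
  obtain ⟨p0, p1⟩ := Psi1_bd (a*t) hnn y N0 hN0 hy0
  obtain ⟨s0, s1⟩ := PsiS_bd (a*t) 1 hnn y Y hyp hyY
  obtain ⟨r0, r1⟩ := PsiS_bd (a*t) 2 hnn y Y hyp hyY
  push_cast
  rw [pow_one] at s1
  generalize Psi1 y = P at *
  generalize PsiS 1 y = S at *
  generalize PsiS 2 y = S2 at *
  generalize PP 2 (a*t) (b*t) = P2 at *
  generalize PP 1 (a*t) (b*t) = P1 at *
  generalize Real.exp 1 ^ 2 = E1 at *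
  generalize (1 - (a : ℝ) / b) ^ (2 * (1 - (a : ℝ) / b) / ((a : ℝ) / b)) = E2 at *
  generalize Real.log (1 / (1 - (a : ℝ) / b)) = L at *
  generalize (a:ℝ)/b = c at *
  have hx : 1/(t:ℝ)^2 = a^2 * (1/((a:ℝ)*t)^2) := by field_simp
  have hKx : 0 ≤ K * (1/(t:ℝ)^2) := by positivity
  generalize (b:ℝ)*t = m at *
  generalize (a:ℝ)*t = N at *
  generalize hA : N^2 * (P2 * (m - 2/N)^2 - P1^2 * (m - 1/N)^2) - E1 * E2 * (L - 2*c) = A at *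
  generalize hB : N * (m - 2/N) * P2 - E1 * E2 * c = B at *
  have e : N^2 * (P^2 * P2 * ((m - 2/N)^2 * S^2 + (m - 2/N)/N * S2) - (P * P1 * (m - 1/N) * S)^2)
      - P^2 * E1 * E2 * ((L - 2*c) * S^2 + c * S2) = P^2 * (A * S^2 + B * S2) := by
    have e1 : N^2 * ((m - 2/N)/N) = N * (m - 2/N) := by field_simp
    rw [← hA, ← hB]
    linear_combination P^2 * P2 * S2 * e1
  rw [e, abs_mul, abs_of_nonneg (sq_nonneg P)]
  have hS2 : S^2 ≤ Y^2 := pow_le_pow_left₀ s0 s1 2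
  have k1 : |A * S^2 + B * S2| ≤ K * (1/(t:ℝ)^2) * Y^2 + K * (1/(t:ℝ)^2) * Y^2 := by
    refine (abs_add_le _ _).trans ?_
    rw [abs_mul, abs_mul, abs_of_nonneg (sq_nonneg S), abs_of_nonneg r0]
    gcongr
  have hNp : 0 ≤ 1/N^2 := by positivity
  calc _ ≤ (N0⁻¹)^2 * (K * (1/(t:ℝ)^2) * Y^2 + K * (1/(t:ℝ)^2) * Y^2) := by gcongr
    _ = (N0⁻¹)^2 * (K * Y^2 + K * Y^2) * a^2 * (1/N^2) := by rw [hx]; ring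
    _ ≤ _ := by
        rw [div_eq_mul_one_div (_ + 1) (N^2), add_mul]; linarith
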